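/- arXiv:1408.6176 — 5 statements merged into one kernel-verified Lean document; each statement's English description precedes it below -/
import Mathlib

section
/- Let P be the tropical polytope generated by v^1,…,v^p ∈ ℝ^n. For every x ∈ P and every i ∈ {1,…,n}, there exists an extreme point v of P of type i such that v ∈ S(x,i). -/
section Defs
variable {α : Type*} [LinearOrder α] [AddCommGroup α]

/-- The sector `S(a,i) = {x | x_j - a_j ≤ x_i - a_i for all j}`. -/
def sector {n : ℕ} (a : Fin n → α) (i : Fin n) : Set (Fin n → α) :=
  {x | ∀ j, x j - a j ≤ x i - a i}

/-- The tropical polytope generated by the points `v 0, …, v (p-1)`: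
each coordinate of `x` is the maximum over `r` of `l r + v r i`. -/
def tropPoly {n p : ℕ} (v : Fin p → Fin n → α) : Set (Fin n → α) :=
  {x | ∃ l : Fin p → α, ∀ i, IsGreatest (Set.range fun r => l r + v r i) (x i)}

/-- `v` is an extreme point of `P` of type `i`. -/
def ExtremeOfType {n : ℕ} (P : Set (Fin n → α)) (v : Fin n → α) (i : Fin n) : Prop :=
  v ∈ P ∧ ∀ x ∈ P ∩ sector v i, ∃ c : α, x = fun k => v k + c

/-- `v` is an extreme point of `P`. -/
def IsExtremePt {n : ℕ} (P : Set (Fin n → α)) (v : Fin n → α) : Prop :=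
  v ∈ P ∧ ∀ x ∈ P, ∀ y ∈ P, (∀ k, v k = max (x k) (y k)) → v = x ∨ v = y

/-- The tropical half-space `H(a,I)`: `max_{i ∈ I} (x_i - a_i) ≥ max_{j ∉ I} (x_j - a_j)`. -/
def halfSpace {n : ℕ} (a : Fin n → α) (I : Set (Fin n)) : Set (Fin n → α) :=
  {x | ∃ i ∈ I, ∀ j ∉ I, x j - a j ≤ x i - a i}

/-- `S_i(a)`, the set of indices `r` such that `v r ∈ S(a, i)`. -/
def typeSet {n p : ℕ} (v : Fin p → Fin n → α) (a : Fin n → α) (i : Fin n) : Set (Fin p) :=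
  {r | v r ∈ sector a i}

/-- `a` is an `(I,j)`-pseudovertex of the tropical polytope generated by `v`. -/
def IsPseudovertex {n p : ℕ} (v : Fin p → Fin n → α) (a : Fin n → α) (I : Set (Fin n))
    (j : Fin n) : Prop :=
  (∀ r, ∃ i ∈ I, r ∈ typeSet v a i) ∧
  (∀ k ∉ I, ∃ i ∈ I, (typeSet v a i ∩ typeSet v a k).Nonempty) ∧
  (∀ i ∈ I, ∃ r, r ∈ typeSet v a i ∩ typeSet v a j ∧ ∀ h ∈ I, h ≠ i → r ∉ typeSet v a h)

end Defs

/-- `P` is pure: `P₀ = {x ∈ P | x 0 = 0}` equals the closure of its interior, relative to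
the hyperplane `{x | x 0 = 0}` with the subspace topology. -/
def IsPure {n : ℕ} [NeZero n] (P : Set (Fin n → ℝ)) : Prop :=
  letI P0 : Set {x : Fin n → ℝ // x 0 = 0} := {x | (x : Fin n → ℝ) ∈ P}
  P0 = closure (interior P0)

/-! Dehomogenizing at the coordinate `i` turns `w ∈ S(x, i)` into a comparison in the product order,
and the extreme points of type `i` into the points of `P` whose dehomogenization is minimal. Every
point of `P` dominates one of the generators in this order, and below each generator there is a
minimal one because there are finitely many; minimal among the generators is then minimal in `P`. -/

theorem exists_minimalFor_le_of_forall_exists_le {ι κ β : Type*} [Finite κ]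
    [Preorder β] {P : ι → Prop} {f : ι → β} {g : κ → ι} (hg : ∀ k, P (g k))
    (hle : ∀ y, P y → ∃ k, f (g k) ≤ f y) {x : ι} (hx : P x) :
    ∃ k, MinimalFor P f (g k) ∧ f (g k) ≤ f x := by
  obtain ⟨k₀, hk₀⟩ := hle x hx
  obtain ⟨_, hk, ⟨k, rfl⟩, hmin⟩ :=
    (Set.finite_range (f ∘ g)).exists_le_minimal (Set.mem_range_self k₀)
  refine ⟨k, ⟨hg k, fun y hy hyk ↦ ?_⟩, hk.trans hk₀⟩
  obtain ⟨s, hs⟩ := hle y hy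
  exact (hmin (Set.mem_range_self s) (hs.trans hyk)).trans hs

section Tropical

variable {α : Type*} [AddCommGroup α] {n p : ℕ}

/-- The dehomogenization of `x` at the coordinate `i`: the representative of the class of `x`
modulo multiples of `𝟙` whose `i`-th coordinate is `0`. Sectors of type `i` are the principal
lower sets of the product order pulled back along it. -/
def dehomogenize (i : Fin n) (x : Fin n → α) : Fin n → α :=
  fun j ↦ x j - x i

theorem dehomogenize_eq_iff_exists_add_const {i : Fin n} {x w : Fin n → α} :
    dehomogenize i x = dehomogenize i w ↔ ∃ c : α, x = fun k ↦ w k + c := by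
  constructor
  · intro h
    refine ⟨x i - w i, funext fun k ↦ ?_⟩
    have hk : x k - x i = w k - w i := congrFun h k
    rw [← sub_add_cancel (x k) (x i), hk]
    abel
  · rintro ⟨c, rfl⟩
    exact funext fun k ↦ add_sub_add_right_eq_sub (w k) (w i) c

variable [LinearOrder α] [IsOrderedAddMonoid α]

theorem mem_sector_iff_dehomogenize_le {i : Fin n} {x w : Fin n → α} :
    w ∈ sector x i ↔ dehomogenize i w ≤ dehomogenize i x :=
  forall_congr' fun j ↦ by
    simp only [dehomogenize, sub_le_sub_iff, add_comm (w i)]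

theorem extremeOfType_iff_minimalFor_dehomogenize {P : Set (Fin n → α)} {w : Fin n → α}
    {i : Fin n} : ExtremeOfType P w i ↔ MinimalFor (· ∈ P) (dehomogenize i) w := by
  simp only [ExtremeOfType, MinimalFor, Set.mem_inter_iff, and_imp,
    mem_sector_iff_dehomogenize_le, ← dehomogenize_eq_iff_exists_add_const (i := i)]
  exact and_congr_right fun _ ↦ forall₃_congr fun _ _ hle ↦ hle.ge_iff_eq.symm

theorem generator_mem_tropPoly (v : Fin p → Fin n → α) (r : Fin p) : v r ∈ tropPoly v := by
  obtain hn | hn := isEmpty_or_nonempty (Fin n)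
  · exact ⟨0, hn.elim⟩
  · -- The residuation of `v r` by `v s`: the largest `c` with `c + v s ≤ v r`.
    let l (s : Fin p) : α := Finset.univ.inf' Finset.univ_nonempty fun j ↦ v r j - v s j
    have l_self : l r = 0 := by simp [l]
    have l_add_le (s : Fin p) (k : Fin n) : l s + v s k ≤ v r k :=
      le_sub_iff_add_le.mp (Finset.inf'_le _ (Finset.mem_univ k))
    refine ⟨l, fun k ↦ ⟨⟨r, ?_⟩, Set.forall_mem_range.mpr fun s ↦ l_add_le s k⟩⟩
    simp only [l_self, zero_add]

theorem exists_dehomogenize_generator_le {v : Fin p → Fin n → α} {x : Fin n → α}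
    (hx : x ∈ tropPoly v) (i : Fin n) : ∃ r, dehomogenize i (v r) ≤ dehomogenize i x := by
  obtain ⟨l, hl⟩ := hx
  obtain ⟨r, hr : l r + v r i = x i⟩ := (hl i).1
  refine ⟨r, fun j ↦ ?_⟩
  have hj : l r + v r j ≤ x j := (hl j).2 (Set.mem_range_self r)
  calc v r j - v r i = (l r + v r j) - (l r + v r i) := (add_sub_add_left_eq_sub _ _ _).symm
    _ ≤ x j - x i := by rw [hr]; exact sub_le_sub_right hj _

theorem exists_extreme_of_type_in_sector_general (v : Fin p → Fin n → α) (x : Fin n → α)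
    (hx : x ∈ tropPoly v) (i : Fin n) :
    ∃ r, ExtremeOfType (tropPoly v) (v r) i ∧ v r ∈ sector x i := by
  simp only [extremeOfType_iff_minimalFor_dehomogenize, mem_sector_iff_dehomogenize_le]
  exact exists_minimalFor_le_of_forall_exists_le (generator_mem_tropPoly v)
    (fun _ hy ↦ exists_dehomogenize_generator_le hy i) hx

end Tropical

/-- for every `x` in the tropical polytope `P` generated by `v` and every
coordinate `i`, there is an extreme point of `P` of type `i` lying in the sector `S(x,i)`. -/
theorem exists_extreme_of_type_in_sector {n p : ℕ} (v : Fin p → Fin n → ℝ)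
    (x : Fin n → ℝ) (hx : x ∈ tropPoly v) (i : Fin n) :
    ∃ w : Fin n → ℝ, ExtremeOfType (tropPoly v) w i ∧ w ∈ sector x i := by
  obtain ⟨r, hr⟩ := exists_extreme_of_type_in_sector_general v x hx i
  exact ⟨v r, hr⟩
end

section
/- Let n ≥ 2 and let u^1,…,u^{n−1} ∈ ℝ^n be in general position. Then there exists exactly one signed tropical hyperplane (as a subset of ℝ^n) containing all the points u^1,…,u^{n−1}. -/
/-- An `m × m` real matrix is tropically singular if the maximum over permutations `σ` of
`∑ i, U i (σ i)` is attained by at least two permutations. -/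
def TropSingular {m : ℕ} (U : Matrix (Fin m) (Fin m) ℝ) : Prop :=
  ∃ σ τ : Equiv.Perm (Fin m), σ ≠ τ ∧
    (∑ i, U i (σ i)) = (∑ i, U i (τ i)) ∧
    ∀ ρ : Equiv.Perm (Fin m), (∑ i, U i (ρ i)) ≤ (∑ i, U i (σ i))

/-- Points `u 0, …, u (q-1)` of `ℝ^n` are in general position if every square submatrix of
the `n × q` matrix whose columns are these points is tropically non-singular. -/
def InGeneralPosition {n q : ℕ} (u : Fin q → Fin n → ℝ) : Prop :=
  ∀ (k : ℕ) (ri : Fin k → Fin n) (ci : Fin k → Fin q),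
    Function.Injective ri → Function.Injective ci →
      ¬ TropSingular (Matrix.of fun s t : Fin k => u (ci t) (ri s))

/-- `H` is a signed tropical hyperplane: a set of the form
`{x | max_{i ∈ I} (x_i - a_i) = max_{j ∉ I} (x_j - a_j)}` for some apex `a` and some
nonempty proper subset `I` of the coordinates. -/
def IsSignedHyperplane {n : ℕ} (H : Set (Fin n → ℝ)) : Prop :=
  ∃ (a : Fin n → ℝ) (I : Set (Fin n)), I.Nonempty ∧ I ≠ Set.univ ∧
    H = {x | (∃ i ∈ I, ∀ j ∉ I, x j - a j ≤ x i - a i) ∧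
             (∃ j ∉ I, ∀ i ∈ I, x i - a i ≤ x j - a j)}

/-!
Call a coordinate `i` tight for a point `x` and an apex `a` if it maximises `x_i - a_i`; a point
lies on the signed hyperplane `(a, I)` iff it has a tight coordinate in `I` and one outside `I`.

An injective assignment of tight coordinates to points has maximal weight among its permutations,
so in general position it is determined by its set of values. By Hall's theorem, a family of sets
with at least two elements each and with such unique transversals behaves like the edges of a
forest: if every point of `S` has two tight coordinates in `L ≠ ∅`, then `#S < #L`.

Existence is a tropical Cramer's rule: let `a_i` be minus the maximal weight of an assignment of the
`n - 1` points to the coordinates other than `i`, and put `i` into `I` according to the sign of the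
optimal assignment, completed by `i` to a permutation. Exchanging one point with the omitted
coordinate gives every point two tight coordinates of opposite signs.

Uniqueness: by the forest bound, no set `L` of coordinates other than `∅` and the full set can be
such that each of the `n - 1` points has two tight coordinates in `L` or two in the complement,
even if the two sides use different apices. Applied to superlevel sets of `b - a` this shows that
two apices differ by a constant, and applied to the set where `I` and `J` agree it shows `J = I` or
`J = Iᶜ`.
-/

open Equiv Finset Function

lemma exists_perm_eq_comp_of_range_eq {ι α : Type*} {f g : ι → α} (hf : Injective f)
    (hg : Injective g) (hfg : Set.range f = Set.range g) : ∃ σ : Perm ι, g = f ∘ σ := by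
  refine ⟨(ofInjective g hg).trans ((setCongr hfg.symm).trans (ofInjective f hf).symm), ?_⟩
  ext s
  simp [apply_ofInjective_symm]

section Transversals

variable {ι α : Type*} [DecidableEq α]

lemma exists_injective_mem_apply_eq {Z : ι → Finset α} {r : ι} {z : α} (hz : z ∈ Z r)
    (hZ : ∀ T : Finset ι, r ∉ T → T.Nonempty → #T < #(T.biUnion Z)) :
    ∃ f : ι → α, Injective f ∧ (∀ s, f s ∈ Z s) ∧ f r = z := by
  classical
  have hall : ∀ T : Finset ι, #T ≤ #(T.biUnion (update Z r {z})) := by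
    intro T
    obtain hT | hT := (T.erase r).eq_empty_or_nonempty
    · obtain rfl | rfl := (erase_eq_empty_iff T r).1 hT <;> simp
    have hcongr : (T.erase r).biUnion (update Z r {z}) = (T.erase r).biUnion Z :=
      biUnion_congr rfl fun s hs ↦ update_of_ne (ne_of_mem_erase hs) _ _
    calc #T ≤ #(T.erase r) + 1 := Nat.le_add_of_sub_le pred_card_le_card_erase
      _ ≤ #((T.erase r).biUnion Z) := hZ _ (notMem_erase r T) hT
      _ = #((T.erase r).biUnion (update Z r {z})) := by rw [hcongr]
      _ ≤ #(T.biUnion (update Z r {z})) :=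
        card_le_card (biUnion_subset_biUnion_of_subset_left _ (erase_subset r T))
  obtain ⟨f, hf, hfZ⟩ := (all_card_le_biUnion_card_iff_exists_injective _).1 hall
  have hfr : f r = z := by simpa using hfZ r
  refine ⟨f, hf, fun s ↦ ?_, hfr⟩
  obtain rfl | hs := eq_or_ne s r
  · rwa [hfr]
  · simpa [hs] using hfZ s

lemma range_eq_coe_biUnion_of_card_le {S : Finset ι} {Z : ι → Finset α} {f : S → α}
    (hf : Injective f) (hfZ : ∀ s : S, f s ∈ Z s) (hcard : #(S.biUnion Z) ≤ #S) :
    Set.range f = S.biUnion Z := by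
  have himage : univ.image f = S.biUnion Z := by
    refine eq_of_subset_of_card_le (fun x hx ↦ ?_) ?_
    · obtain ⟨s, -, rfl⟩ := mem_image.1 hx
      exact mem_biUnion.2 ⟨s, s.2, hfZ s⟩
    · rwa [card_image_of_injective _ hf, card_univ, Fintype.card_coe]
  rw [← himage, coe_image, coe_univ, Set.image_univ]

theorem card_lt_card_biUnion_of_unique_transversals {Z : ι → Finset α} {S : Finset ι}
    (hS : S.Nonempty) (hZ : ∀ r ∈ S, (Z r).Nontrivial)
    (huniq : ∀ (T : Finset ι) (f g : T → α), Injective f → Injective g →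
      (∀ s : T, f s ∈ Z s) → (∀ s : T, g s ∈ Z s) → Set.range f = Set.range g → f = g) :
    #S < #(S.biUnion Z) := by
  classical
  induction S using Finset.strongInduction with
  | H S ih =>
    by_contra! hcard
    obtain ⟨r, hr⟩ := hS
    obtain ⟨z, hz, w, hw, hzw⟩ := hZ r hr
    have proper_lt : ∀ T : Finset S, ⟨r, hr⟩ ∉ T → T.Nonempty →
        #T < #(T.biUnion fun s ↦ Z s) := by
      intro T hrT hT
      have hssub : T.image Subtype.val ⊂ S := by
        refine (ssubset_iff_of_subset ?_).2 ⟨r, hr, by simpa [hr] using hrT⟩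
        exact image_subset_iff.2 fun s _ ↦ s.2
      simpa [image_biUnion, card_image_of_injective _ Subtype.val_injective] using
        ih _ hssub (hT.image _) fun s hs ↦ hZ s (hssub.1 hs)
    obtain ⟨f, hf, hfZ, hfr⟩ := exists_injective_mem_apply_eq (Z := fun s : S ↦ Z s) hz proper_lt
    obtain ⟨g, hg, hgZ, hgr⟩ := exists_injective_mem_apply_eq (Z := fun s : S ↦ Z s) hw proper_lt
    have hfg : f = g := huniq S f g hf hg hfZ hgZ <|
      (range_eq_coe_biUnion_of_card_le hf hfZ hcard).trans
        (range_eq_coe_biUnion_of_card_le hg hgZ hcard).symm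
    exact hzw (by rw [← hfr, ← hgr, hfg])

end Transversals

section Tight

variable {ι : Type*} {x a b : ι → ℝ} {i j : ι} {I : Set ι}

/-- The coordinates at which `x - a` attains its maximum, i.e. the indices of the closed sectors at
the apex `a` that contain `x`. -/
def tightSet (x a : ι → ℝ) : Set ι := {i | ∀ j, x j - a j ≤ x i - a i}

/-- The signed tropical hyperplane with apex `a` and sign pattern `I`, in a form symmetric in `I`
and `Iᶜ`; it agrees with the set in `IsSignedHyperplane`, see `isSignedHyperplane_iff`. -/
def signedHyperplane (a : ι → ℝ) (I : Set ι) : Set (ι → ℝ) :=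
  {x | (tightSet x a ∩ I).Nonempty ∧ (tightSet x a \ I).Nonempty}

lemma mem_signedHyperplane_iff_exists_le :
    x ∈ signedHyperplane a I ↔ (∃ i ∈ I, ∀ j ∉ I, x j - a j ≤ x i - a i) ∧
      ∃ j ∉ I, ∀ i ∈ I, x i - a i ≤ x j - a j := by
  constructor
  · rintro ⟨⟨i, hi, hiI⟩, j, hj, hjI⟩
    exact ⟨⟨i, hiI, fun k _ ↦ hi k⟩, j, hjI, fun k _ ↦ hj k⟩
  · rintro ⟨⟨i, hiI, hi⟩, j, hjI, hj⟩
    refine ⟨⟨i, fun k ↦ ?_, hiI⟩, j, fun k ↦ ?_, hjI⟩ <;> by_cases hk : k ∈ I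
    · exact (hj k hk).trans (hi j hjI)
    · exact hi k hk
    · exact hj k hk
    · exact (hi k hk).trans (hj i hiI)

lemma isSignedHyperplane_iff {n : ℕ} {H : Set (Fin n → ℝ)} :
    IsSignedHyperplane H ↔ ∃ a I, I.Nonempty ∧ I ≠ Set.univ ∧ H = signedHyperplane a I := by
  simp only [IsSignedHyperplane, Set.ext_iff, mem_signedHyperplane_iff_exists_le, Set.mem_ofPred_eq]

lemma isSignedHyperplane_of_mem {n : ℕ} {x a : Fin n → ℝ} {I : Set (Fin n)}
    (hx : x ∈ signedHyperplane a I) : IsSignedHyperplane (signedHyperplane a I) := by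
  obtain ⟨⟨i, -, hi⟩, j, -, hj⟩ := hx
  exact isSignedHyperplane_iff.2 ⟨a, I, ⟨i, hi⟩, fun h ↦ hj (h ▸ Set.mem_univ j), rfl⟩

lemma tightSet_nontrivial_of_mem (hx : x ∈ signedHyperplane a I) : (tightSet x a).Nontrivial := by
  obtain ⟨⟨i, hi, hiI⟩, j, hj, hjI⟩ := hx
  exact ⟨i, hi, j, hj, ne_of_mem_of_not_mem hiI hjI⟩

lemma signedHyperplane_compl (a : ι → ℝ) (I : Set ι) :
    signedHyperplane a Iᶜ = signedHyperplane a I := by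
  ext x
  simp only [signedHyperplane, Set.mem_ofPred_eq, Set.sdiff_compl, ← Set.sdiff_eq, and_comm]

lemma tightSet_congr (hab : ∀ i j, b i - a i = b j - a j) (x : ι → ℝ) :
    tightSet x a = tightSet x b := by
  ext i
  refine forall_congr' fun j ↦ ?_
  have := hab i j
  constructor <;> intro _ <;> linarith

lemma sub_le_sub_of_mem_tightSet (hi : i ∈ tightSet x b) (hj : j ∈ tightSet x a) :
    b i - a i ≤ b j - a j := by
  linarith [hi j, hj i]

lemma nontrivial_inter_or_sdiff_setOf_mem_iff {T I J : Set ι} (hI : (T ∩ I).Nonempty)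
    (hI' : (T \ I).Nonempty) (hJ : (T ∩ J).Nonempty) (hJ' : (T \ J).Nonempty) :
    (T ∩ {i | i ∈ I ↔ i ∈ J}).Nontrivial ∨ (T \ {i | i ∈ I ↔ i ∈ J}).Nontrivial := by
  obtain ⟨i, hiT, hi⟩ := hI
  obtain ⟨i', hiT', hi'⟩ := hI'
  obtain ⟨j, hjT, hj⟩ := hJ
  obtain ⟨j', hjT', hj'⟩ := hJ'
  by_cases hiJ : i ∈ J <;> by_cases hiJ' : i' ∈ J
  · by_cases hjI' : j' ∈ I
    · exact .inr ⟨i', ⟨hiT', by simp [*]⟩, j', ⟨hjT', by simp [*]⟩, by grind⟩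
    · exact .inl ⟨i, ⟨hiT, by simp [*]⟩, j', ⟨hjT', by simp [*]⟩, by grind⟩
  · exact .inl ⟨i, ⟨hiT, by simp [*]⟩, i', ⟨hiT', by simp [*]⟩, by grind⟩
  · exact .inr ⟨i, ⟨hiT, by simp [*]⟩, i', ⟨hiT', by simp [*]⟩, by grind⟩
  · by_cases hjI : j ∈ I
    · exact .inl ⟨i', ⟨hiT', by simp [*]⟩, j, ⟨hjT, by simp [*]⟩, by grind⟩
    · exact .inr ⟨i, ⟨hiT, by simp [*]⟩, j, ⟨hjT, by simp [*]⟩, by grind⟩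

end Tight

section Optimal

variable {ι κ : Type*} [Fintype κ] {w : κ → ι → ℝ} {f g : κ → ι}

/-- The assignment `f` of columns to the rows of `w` has maximal weight among all assignments
obtained from it by a permutation of the rows. -/
def IsOptimalAssignment (w : κ → ι → ℝ) (f : κ → ι) : Prop :=
  ∀ σ : Perm κ, ∑ s, w s (f (σ s)) ≤ ∑ s, w s (f s)

lemma isOptimalAssignment_of_mem_tightSet (a : ι → ℝ) (hf : ∀ s, f s ∈ tightSet (w s) a) :
    IsOptimalAssignment w f := by
  intro σ
  have hsum : ∑ s, (w s (f (σ s)) - a (f (σ s))) ≤ ∑ s, (w s (f s) - a (f s)) :=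
    sum_le_sum fun s _ ↦ hf s _
  have ha : ∑ s, a (f (σ s)) = ∑ s, a (f s) := Equiv.sum_comp σ fun s ↦ a (f s)
  rw [sum_sub_distrib, sum_sub_distrib, ha] at hsum
  linarith

lemma IsOptimalAssignment.sum_le (hopt : IsOptimalAssignment w f) (hf : Injective f)
    (hg : Injective g) (hfg : Set.range f = Set.range g) :
    ∑ s, w s (g s) ≤ ∑ s, w s (f s) := by
  obtain ⟨σ, rfl⟩ := exists_perm_eq_comp_of_range_eq hf hg hfg
  exact hopt σ

lemma exists_isOptimalAssignment_comp (w : κ → ι → ℝ) (f : κ → ι) :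
    ∃ σ : Perm κ, IsOptimalAssignment w (f ∘ σ) := by
  obtain ⟨σ, hσ⟩ := Finite.exists_max fun σ : Perm κ ↦ ∑ s, w s (f (σ s))
  exact ⟨σ, fun τ ↦ hσ (σ * τ)⟩

end Optimal

namespace InGeneralPosition

section Assignments

variable {n q : ℕ} {u : Fin q → Fin n → ℝ} {κ : Type*} {c : κ → Fin q}
  {f g : κ → Fin n}

lemma perm_eq_one [Fintype κ] (hgen : InGeneralPosition u) (hc : Injective c) (hf : Injective f)
    (hopt : IsOptimalAssignment (u ∘ c) f) {σ : Perm κ}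
    (hσ : ∑ s, u (c s) (f s) ≤ ∑ s, u (c s) (f (σ s))) : σ = 1 := by
  by_contra hne
  let e := Fintype.equivFin κ
  have reindex (ρ : Perm κ) : ∑ i, u (c (e.symm (e.permCongr ρ i))) (f (e.symm i)) =
      ∑ s, u (c s) (f (ρ⁻¹ s)) := by
    rw [← Equiv.sum_comp (ρ⁻¹.trans e)]
    simp
  refine hgen _ (f ∘ e.symm) (c ∘ e.symm) (hf.comp e.symm.injective) (hc.comp e.symm.injective)
    ⟨e.permCongr 1, e.permCongr σ⁻¹, ?_, ?_, fun ρ ↦ ?_⟩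
  · simpa [eq_comm] using hne
  · simpa only [Matrix.of_apply, comp_apply, reindex, inv_one, inv_inv, Perm.one_apply] using
      hσ.antisymm (hopt σ)
  · obtain ⟨τ, rfl⟩ := e.permCongr.surjective ρ
    simpa only [Matrix.of_apply, comp_apply, reindex, inv_one, Perm.one_apply] using hopt τ⁻¹

lemma eq_of_isOptimalAssignment [Fintype κ] (hgen : InGeneralPosition u) (hc : Injective c)
    (hf : Injective f) (hg : Injective g) (hfg : Set.range f = Set.range g)
    (hopt : IsOptimalAssignment (u ∘ c) f)
    (hle : ∑ s, u (c s) (f s) ≤ ∑ s, u (c s) (g s)) : f = g := by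
  obtain ⟨σ, rfl⟩ := exists_perm_eq_comp_of_range_eq hf hg hfg
  rw [hgen.perm_eq_one hc hf hopt hle, Perm.coe_one, comp_id]

lemma eq_of_mem_tightSet [Finite κ] (hgen : InGeneralPosition u) (a : Fin n → ℝ)
    (hc : Injective c) (hf : Injective f) (hg : Injective g) (hfg : Set.range f = Set.range g)
    (hfa : ∀ s, f s ∈ tightSet (u (c s)) a) (hga : ∀ s, g s ∈ tightSet (u (c s)) a) : f = g := by
  have := Fintype.ofFinite κ
  exact hgen.eq_of_isOptimalAssignment hc hf hg hfg (isOptimalAssignment_of_mem_tightSet a hfa) <|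
    (isOptimalAssignment_of_mem_tightSet (w := u ∘ c) a hga).sum_le hg hf hfg.symm

theorem card_lt_card_of_nontrivial_inter (hgen : InGeneralPosition u) (a : Fin n → ℝ)
    {S : Finset (Fin q)} {L : Finset (Fin n)} (hL : L.Nonempty)
    (hS : ∀ r ∈ S, (tightSet (u r) a ∩ L).Nontrivial) : #S < #L := by
  classical
  obtain rfl | hSne := S.eq_empty_or_nonempty
  · simpa using hL
  let Z : Fin q → Finset (Fin n) := fun r ↦ L.filter (· ∈ tightSet (u r) a)
  have hZ_coe (r) : (Z r : Set (Fin n)) = tightSet (u r) a ∩ L := by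
    ext; simp [Z, and_comm]
  have hZ_tight {r i} (hi : i ∈ Z r) : i ∈ tightSet (u r) a := (mem_filter.1 hi).2
  calc #S < #(S.biUnion Z) := by
        refine card_lt_card_biUnion_of_unique_transversals hSne (fun r hr ↦ ?_)
          fun T f g hf hg hfZ hgZ hfg ↦ hgen.eq_of_mem_tightSet a Subtype.val_injective hf hg hfg
            (fun s ↦ hZ_tight (hfZ s)) (fun s ↦ hZ_tight (hgZ s))
        rw [Finset.Nontrivial, hZ_coe]
        exact hS r hr
    _ ≤ #L := card_le_card (biUnion_subset.2 fun r _ ↦ filter_subset _ _)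

end Assignments

section Uniqueness

variable {m : ℕ} {u : Fin m → Fin (m + 1) → ℝ} {a b : Fin (m + 1) → ℝ} {I J L : Set (Fin (m + 1))}

theorem eq_empty_or_eq_univ_of_nontrivial (hgen : InGeneralPosition u)
    (hL : ∀ r, (tightSet (u r) a ∩ L).Nontrivial ∨ (tightSet (u r) b \ L).Nontrivial) :
    L = ∅ ∨ L = Set.univ := by
  classical
  by_contra! h
  obtain ⟨hne, hne_univ⟩ := h
  let S : Finset (Fin m) := {r | (tightSet (u r) a ∩ L).Nontrivial}
  have hS : #S < #L.toFinset := by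
    refine hgen.card_lt_card_of_nontrivial_inter a (Set.toFinset_nonempty.2 hne) fun r hr ↦ ?_
    simpa [S] using hr
  have hSc : #Sᶜ < #(L.toFinset)ᶜ := by
    refine hgen.card_lt_card_of_nontrivial_inter b ?_ fun r hr ↦ ?_
    · rwa [nonempty_iff_ne_empty, Ne, compl_eq_empty_iff, Set.toFinset_eq_univ]
    · rw [coe_compl, Set.coe_toFinset, ← Set.sdiff_eq]
      exact (hL r).resolve_left (by simpa [S] using hr)
  have hm := card_add_card_compl S
  have hm' := card_add_card_compl L.toFinset
  simp only [Fintype.card_fin] at hm hm'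
  omega

lemma sub_eq_sub_of_nontrivial (hgen : InGeneralPosition u)
    (ha : ∀ r, (tightSet (u r) a).Nontrivial) (hb : ∀ r, (tightSet (u r) b).Nontrivial)
    (i j : Fin (m + 1)) : b i - a i = b j - a j := by
  suffices hle : ∀ i j, b i - a i ≤ b j - a j from (hle i j).antisymm (hle j i)
  intro i
  let L := {j | b i - a i ≤ b j - a j}
  have hL : L = ∅ ∨ L = Set.univ := by
    refine hgen.eq_empty_or_eq_univ_of_nontrivial (a := a) (b := b) fun r ↦ ?_
    by_cases hr : ∃ k ∈ tightSet (u r) b, k ∈ L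
    · obtain ⟨k, hk, hkL⟩ := hr
      exact .inl <| (ha r).mono fun l hl ↦ ⟨hl, hkL.trans (sub_le_sub_of_mem_tightSet hk hl)⟩
    · exact .inr <| (hb r).mono fun l hl ↦ ⟨hl, fun hlL ↦ hr ⟨l, hl, hlL⟩⟩
  have hi : i ∈ L := le_refl (b i - a i)
  exact Set.eq_univ_iff_forall.1 (hL.resolve_left (Set.nonempty_of_mem hi).ne_empty)

lemma eq_or_eq_compl_of_forall_mem (hgen : InGeneralPosition u)
    (hI : ∀ r, u r ∈ signedHyperplane a I) (hJ : ∀ r, u r ∈ signedHyperplane a J) :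
    J = I ∨ J = Iᶜ := by
  obtain hK | hK := hgen.eq_empty_or_eq_univ_of_nontrivial fun r ↦
    nontrivial_inter_or_sdiff_setOf_mem_iff (hI r).1 (hI r).2 (hJ r).1 (hJ r).2
  · right
    ext i
    have : ¬(i ∈ I ↔ i ∈ J) := Set.eq_empty_iff_forall_notMem.1 hK i
    rw [Set.mem_compl_iff]
    tauto
  · left
    ext i
    exact (Set.eq_univ_iff_forall.1 hK i).symm

theorem signedHyperplane_eq_of_forall_mem (hgen : InGeneralPosition u)
    (ha : ∀ r, u r ∈ signedHyperplane a I) (hb : ∀ r, u r ∈ signedHyperplane b J) :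
    signedHyperplane b J = signedHyperplane a I := by
  have htight : ∀ x, tightSet x a = tightSet x b := tightSet_congr <|
    hgen.sub_eq_sub_of_nontrivial (fun r ↦ tightSet_nontrivial_of_mem (ha r))
      fun r ↦ tightSet_nontrivial_of_mem (hb r)
  have hba : signedHyperplane b J = signedHyperplane a J := by
    simp only [signedHyperplane, htight]
  rw [hba] at hb ⊢
  obtain rfl | rfl := hgen.eq_or_eq_compl_of_forall_mem ha hb
  · rfl
  · exact signedHyperplane_compl a I

end Uniqueness

end InGeneralPosition

section Cramer

variable {m : ℕ} (u : Fin m → Fin (m + 1) → ℝ)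

/-- The weight of the assignment of the points `u r` to distinct coordinates given by a permutation
`π` of `Fin (m + 1)`, where `π (Fin.last m)` is the coordinate left out. -/
def assignmentWeight (π : Perm (Fin (m + 1))) : ℝ := ∑ r, u r (π r.castSucc)

lemma range_perm_comp_castSucc (π : Perm (Fin (m + 1))) :
    Set.range (π ∘ Fin.castSucc) = {π (Fin.last m)}ᶜ := by
  have hrange : Set.range (Fin.castSucc (n := m)) = {Fin.last m}ᶜ :=
    Set.ext fun _ ↦ Fin.exists_castSucc_eq
  rw [Set.range_comp, hrange, Set.image_compl_eq π.bijective, Set.image_singleton]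

lemma injective_perm_comp_castSucc (π : Perm (Fin (m + 1))) : Injective (π ∘ Fin.castSucc) :=
  π.injective.comp (Fin.castSucc_injective m)

lemma exists_perm_isOptimalAssignment (i : Fin (m + 1)) :
    ∃ π : Perm (Fin (m + 1)), π (Fin.last m) = i ∧ IsOptimalAssignment u (π ∘ Fin.castSucc) := by
  obtain ⟨σ, hσ⟩ := exists_isOptimalAssignment_comp u (swap (Fin.last m) i ∘ Fin.castSucc)
  let σ' : Perm (Fin (m + 1)) := σ.viaFintypeEmbedding Fin.castSuccEmb
  have hlast : σ' (Fin.last m) = Fin.last m :=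
    σ.viaFintypeEmbedding_apply_notMem_range _ (by simp)
  have hcast : σ' ∘ Fin.castSucc = Fin.castSucc ∘ σ :=
    funext (σ.viaFintypeEmbedding_apply_image Fin.castSuccEmb)
  refine ⟨swap (Fin.last m) i * σ', by simp [hlast], ?_⟩
  rwa [Perm.coe_mul, comp_assoc, hcast]

lemma assignmentWeight_mul_swap_add (π : Perm (Fin (m + 1))) (r : Fin m) :
    assignmentWeight u (π * swap r.castSucc (Fin.last m)) + u r (π r.castSucc) =
      assignmentWeight u π + u r (π (Fin.last m)) := by
  have hne : ∀ s ∈ univ.erase r, (π * swap r.castSucc (Fin.last m)) s.castSucc = π s.castSucc := by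
    intro s hs
    have hsr : s.castSucc ≠ r.castSucc := (Fin.castSucc_injective m).ne (ne_of_mem_erase hs)
    rw [Perm.mul_apply, swap_apply_of_ne_of_ne hsr (Fin.castSucc_lt_last s).ne]
  simp only [assignmentWeight]
  rw [← add_sum_erase _ _ (mem_univ r), ← add_sum_erase _ (fun s ↦ u s (π s.castSucc)) (mem_univ r),
    sum_congr rfl fun s hs ↦ by rw [hne s hs]]
  simp only [Perm.mul_apply, swap_apply_left]
  ring

end Cramer

namespace InGeneralPosition

section Existence

variable {m : ℕ} {u : Fin m → Fin (m + 1) → ℝ}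

lemma perm_eq_of_isOptimalAssignment (hgen : InGeneralPosition u) {π ρ : Perm (Fin (m + 1))}
    (hlast : π (Fin.last m) = ρ (Fin.last m)) (hopt : IsOptimalAssignment u (π ∘ Fin.castSucc))
    (hle : assignmentWeight u π ≤ assignmentWeight u ρ) : π = ρ := by
  have hrange : Set.range (π ∘ Fin.castSucc) = Set.range (ρ ∘ Fin.castSucc) := by
    rw [range_perm_comp_castSucc, range_perm_comp_castSucc, hlast]
  have hcast := hgen.eq_of_isOptimalAssignment injective_id (injective_perm_comp_castSucc π)
    (injective_perm_comp_castSucc ρ) hrange hopt hle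
  exact Equiv.ext (Fin.lastCases hlast (congrFun hcast))

lemma exists_mem_tightSet_sign_eq_neg (hgen : InGeneralPosition u)
    {P : Fin (m + 1) → Perm (Fin (m + 1))} (hlast : ∀ i, P i (Fin.last m) = i)
    (hopt : ∀ i, IsOptimalAssignment u (P i ∘ Fin.castSucc)) (r : Fin m) :
    ∃ i ∈ tightSet (u r) (fun k ↦ -assignmentWeight u (P k)),
      ∃ j ∈ tightSet (u r) (fun k ↦ -assignmentWeight u (P k)),
        Perm.sign (P j) = -Perm.sign (P i) := by
  obtain ⟨i, hi⟩ := Finite.exists_max fun k ↦ u r k - -assignmentWeight u (P k)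
  let j := P i r.castSucc
  let Q := P i * swap r.castSucc (Fin.last m)
  have hQlast : P j (Fin.last m) = Q (Fin.last m) := by simp [Q, j, hlast]
  have hQweight : assignmentWeight u Q + u r j = assignmentWeight u (P i) + u r i := by
    simpa only [hlast] using assignmentWeight_mul_swap_add u (P i) r
  have hPQ : P j = Q := by
    refine hgen.perm_eq_of_isOptimalAssignment hQlast (hopt j) ?_
    linarith [hi j]
  refine ⟨i, hi, j, fun k ↦ ?_, ?_⟩
  · simp only [hPQ]
    linarith [hi k]
  · rw [hPQ, Perm.sign_mul, Perm.sign_swap (Fin.castSucc_lt_last r).ne, mul_neg_one]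

theorem exists_forall_mem_signedHyperplane (hgen : InGeneralPosition u) :
    ∃ a I, ∀ r, u r ∈ signedHyperplane a I := by
  choose P hlast hopt using exists_perm_isOptimalAssignment u
  refine ⟨fun i ↦ -assignmentWeight u (P i), {i | Perm.sign (P i) = 1}, fun r ↦ ?_⟩
  obtain ⟨i, hi, j, hj, hij⟩ := hgen.exists_mem_tightSet_sign_eq_neg hlast hopt r
  obtain hsign | hsign := Int.units_eq_one_or (Perm.sign (P i))
  · exact ⟨⟨i, hi, hsign⟩, j, hj, by simp [hij, hsign]⟩
  · exact ⟨⟨j, hj, by simp [hij, hsign]⟩, i, hi, by simp [hsign]⟩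

end Existence

end InGeneralPosition

/-- if `n ≥ 2` and the points `u 0, …, u (n-2)` of `ℝ^n` are in general
position, then there is exactly one signed tropical hyperplane containing all of them. -/
theorem existsUnique_signedHyperplane {n : ℕ} (hn : 2 ≤ n)
    (u : Fin (n - 1) → Fin n → ℝ) (hgen : InGeneralPosition u) :
    ∃! H : Set (Fin n → ℝ), IsSignedHyperplane H ∧ ∀ r : Fin (n - 1), u r ∈ H := by
  obtain ⟨m, rfl⟩ : ∃ m, n = m + 1 := ⟨n - 1, by omega⟩
  obtain ⟨a, I, ha⟩ := hgen.exists_forall_mem_signedHyperplane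
  refine ⟨signedHyperplane a I, ⟨isSignedHyperplane_of_mem (ha ⟨0, by omega⟩), ha⟩, ?_⟩
  rintro H ⟨hH, hu⟩
  obtain ⟨b, J, -, -, rfl⟩ := isSignedHyperplane_iff.1 hH
  exact hgen.signedHyperplane_eq_of_forall_mem ha hu
end

section
/- Let u^1,…,u^p ∈ ℝ^n be in general position, and for each r ∈ {1,…,p} let 𝐮^r ∈ K^n be a vector all of whose coordinates are nonzero and positive elements of K with val(𝐮^r_i) = u^r_i for every i. Then every square submatrix of the n×p matrix over K whose columns are 𝐮^1,…,𝐮^p has nonzero determinant. -/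
/-- A nonzero Hahn series is positive if its leading coefficient is positive. -/
def HahnPos (x : HahnSeries ℝ ℝ) : Prop := x ≠ 0 ∧ 0 < x.coeff x.order

/-!
The Leibniz expansion of a determinant over a valued ring has the terms `± ∏ i, A (σ i) i`, and
the sign does not change the valuation. If one term strictly dominates all others, the ultrametric
inequality makes it determine the valuation of the determinant. Tropical non-singularity of the
matrix of valuations says exactly that such a dominating term exists, and since the entries are
nonzero its valuation is not that of `0`.
-/

theorem valuation_intUnits_smul {R Γ₀ : Type*} [Ring R] [LinearOrderedCommMonoidWithZero Γ₀]
    (v : Valuation R Γ₀) (ε : ℤˣ) (x : R) : v (ε • x) = v x := by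
  rcases Int.units_eq_one_or ε with rfl | rfl <;> simp [Units.smul_def]

section Determinant

variable {ι R : Type*} [Fintype ι] [DecidableEq ι] [CommRing R]

theorem valuation_det_eq_prod_of_forall_lt {Γ₀ : Type*} [LinearOrderedCommMonoidWithZero Γ₀]
    (v : Valuation R Γ₀) (A : Matrix ι ι R) (σ : Equiv.Perm ι)
    (hσ : ∀ τ ≠ σ, ∏ i, v (A (τ i) i) < ∏ i, v (A (σ i) i)) :
    v A.det = ∏ i, v (A (σ i) i) := by
  have valuation_term (τ : Equiv.Perm ι) :
      v (Equiv.Perm.sign τ • ∏ i, A (τ i) i) = ∏ i, v (A (τ i) i) := by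
    rw [valuation_intUnits_smul, map_prod]
  rw [Matrix.det_apply, v.map_sum_eq_of_lt (Finset.mem_univ σ), valuation_term]
  intro τ hτ
  rw [valuation_term, valuation_term]
  exact hσ τ (by simpa using hτ)

theorem addValuation_det_eq_sum_of_forall_lt {Γ₀ : Type*} [LinearOrderedAddCommMonoidWithTop Γ₀]
    (v : AddValuation R Γ₀) (A : Matrix ι ι R) (σ : Equiv.Perm ι)
    (hσ : ∀ τ ≠ σ, ∑ i, v (A (σ i) i) < ∑ i, v (A (τ i) i)) :
    v A.det = ∑ i, v (A (σ i) i) :=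
  valuation_det_eq_prod_of_forall_lt (AddValuation.toValuation v) A σ hσ

theorem hahnSeries_orderTop_det_eq_sum_of_forall_lt {Γ : Type*} [AddCancelCommMonoid Γ]
    [LinearOrder Γ] [IsOrderedCancelAddMonoid Γ] [IsDomain R]
    (A : Matrix ι ι (HahnSeries Γ R)) (hA : ∀ i j, A i j ≠ 0) (σ : Equiv.Perm ι)
    (hσ : ∀ τ ≠ σ, ∑ i, (A (σ i) i).order < ∑ i, (A (τ i) i).order) :
    A.det.orderTop = ∑ i, (A (σ i) i).order := by
  have sum_addVal (τ : Equiv.Perm ι) :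
      ∑ i, HahnSeries.addVal Γ R (A (τ i) i) = ↑(∑ i, (A (τ i) i).order) := by
    simp only [HahnSeries.addVal_apply, ← HahnSeries.order_eq_orderTop_of_ne_zero (hA _ _),
      WithTop.coe_sum]
  rw [← HahnSeries.addVal_apply, addValuation_det_eq_sum_of_forall_lt _ A σ, sum_addVal]
  intro τ hτ
  rw [sum_addVal, sum_addVal]
  exact WithTop.coe_lt_coe.2 (hσ τ hτ)

end Determinant

theorem exists_perm_forall_sum_lt_of_not_tropSingular {m : ℕ} {M : Matrix (Fin m) (Fin m) ℝ}
    (hM : ¬ TropSingular M) :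
    ∃ σ : Equiv.Perm (Fin m), ∀ τ ≠ σ, ∑ i, M i (τ i) < ∑ i, M i (σ i) := by
  obtain ⟨σ, hσ⟩ := Finite.exists_max fun σ : Equiv.Perm (Fin m) => ∑ i, M i (σ i)
  exact ⟨σ, fun τ hτ => (hσ τ).lt_of_ne fun heq => hM ⟨σ, τ, hτ.symm, heq.symm, hσ⟩⟩

theorem det_ne_zero_of_not_tropSingular_neg_order {R : Type*} [CommRing R] [IsDomain R] {m : ℕ}
    (A : Matrix (Fin m) (Fin m) (HahnSeries ℝ R)) (hA : ∀ i j, A i j ≠ 0)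
    (hns : ¬ TropSingular (Matrix.of fun i j => -(A i j).order)) : A.det ≠ 0 := by
  obtain ⟨σ, hσ⟩ := exists_perm_forall_sum_lt_of_not_tropSingular hns
  simp only [Matrix.of_apply, Finset.sum_neg_distrib, neg_lt_neg_iff] at hσ
  have orderTop_det := hahnSeries_orderTop_det_eq_sum_of_forall_lt A.transpose
    (fun i j => hA j i) σ hσ
  rw [← Matrix.det_transpose, ← HahnSeries.orderTop_ne_top, orderTop_det]
  exact WithTop.coe_ne_top

theorem lift_general_position_det_ne_zero_general {R : Type*} [CommRing R] [IsDomain R] {n p : ℕ}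
    (u : Fin p → Fin n → ℝ) (hgen : InGeneralPosition u)
    (U : Fin p → Fin n → HahnSeries ℝ R)
    (hne : ∀ r i, U r i ≠ 0)
    (hval : ∀ r i, -(U r i).order = u r i) :
    ∀ (k : ℕ) (ri : Fin k → Fin n) (ci : Fin k → Fin p),
      Function.Injective ri → Function.Injective ci →
        Matrix.det (Matrix.of fun s t : Fin k => U (ci t) (ri s)) ≠ 0 := by
  intro k ri ci hri hci
  apply det_ne_zero_of_not_tropSingular_neg_order _ fun s t => hne (ci t) (ri s)
  simpa only [Matrix.of_apply, hval] using hgen k ri ci hri hci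

/-- if the points `u 1, …, u p` of `ℝ^n` are in general position and
`U r` is a vector of nonzero positive Hahn series with `val (U r i) = u r i`, then every
square submatrix of the `n × p` matrix over `K` with columns `U 1, …, U p` has nonzero
determinant. -/
theorem lift_general_position_det_ne_zero {n p : ℕ}
    (u : Fin p → Fin n → ℝ) (hgen : InGeneralPosition u)
    (U : Fin p → Fin n → HahnSeries ℝ ℝ)
    (hpos : ∀ r i, HahnPos (U r i))
    (hval : ∀ r i, -(U r i).order = u r i) :
    ∀ (k : ℕ) (ri : Fin k → Fin n) (ci : Fin k → Fin p),
      Function.Injective ri → Function.Injective ci →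
        Matrix.det (Matrix.of fun s t : Fin k => U (ci t) (ri s)) ≠ 0 :=
  lift_general_position_det_ne_zero_general u hgen U (fun r i => (hpos r i).1) hval
end

section
/- Let n ≥ 2 and 1 ≤ p < n. Then the tropical polytope P generated by any points v^1,…,v^p ∈ ℝ^n is not pure. -/
/-! With fewer generators than coordinates, two coordinates `i ≠ j` of a point `x` of the polytope
attain their maximum at the same generator `v r`, so `x i - x j = v r i - v r j`. The polytope thus
lies in finitely many hyperplanes, and a line whose direction has pairwise distinct coordinates
meets each of them only once. Hence `P₀` has empty interior, although it is nonempty. -/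

section TropicalPolytope

variable {n p : ℕ}

lemma tropPoly_nonempty {α : Type*} [LinearOrder α] [AddCommGroup α] [Nonempty (Fin p)]
    (v : Fin p → Fin n → α) : (tropPoly v).Nonempty := by
  choose r hr using fun i => Finite.exists_max fun s => v s i
  refine ⟨fun i => v (r i) i, 0, fun i => ⟨⟨r i, zero_add _⟩, ?_⟩⟩
  rintro _ ⟨s, rfl⟩
  simpa only [Pi.zero_apply, zero_add] using hr i s

lemma const_add_mem_tropPoly {α : Type*} [LinearOrder α] [AddCommGroup α] [IsOrderedAddMonoid α]
    {v : Fin p → Fin n → α} {x : Fin n → α} (hx : x ∈ tropPoly v) (c : α) :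
    (fun i => c + x i) ∈ tropPoly v := by
  obtain ⟨l, hl⟩ := hx
  refine ⟨fun r => c + l r, fun i => ?_⟩
  obtain ⟨⟨r, hr⟩, hmax⟩ := hl i
  refine ⟨⟨r, (add_assoc c _ _).trans (congrArg (c + ·) hr)⟩, ?_⟩
  rintro _ ⟨s, rfl⟩
  simpa only [add_assoc, add_le_add_iff_left] using hmax ⟨s, rfl⟩

lemma exists_mem_tropPoly_apply_eq_zero {α : Type*} [LinearOrder α] [AddCommGroup α]
    [IsOrderedAddMonoid α] [Nonempty (Fin p)] (v : Fin p → Fin n → α) (k : Fin n) :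
    ∃ x ∈ tropPoly v, x k = 0 := by
  obtain ⟨x, hx⟩ := tropPoly_nonempty v
  exact ⟨_, const_add_mem_tropPoly hx (-x k), neg_add_cancel _⟩

lemma exists_ne_sub_eq_sub_of_mem_tropPoly {α : Type*} [LinearOrder α] [AddCommGroup α]
    (hpn : p < n) {v : Fin p → Fin n → α} {x : Fin n → α} (hx : x ∈ tropPoly v) :
    ∃ i j r, i ≠ j ∧ x i - x j = v r i - v r j := by
  obtain ⟨l, hl⟩ := hx
  choose r hr using fun i => (hl i).1
  obtain ⟨i, j, hij, hrij⟩ :=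
    Fintype.exists_ne_map_eq_of_card_lt r (by simpa only [Fintype.card_fin] using hpn)
  refine ⟨i, j, r i, hij, ?_⟩
  rw [← hr i, ← hr j, ← hrij, add_sub_add_left_eq_sub]

lemma finite_setOf_add_smul_mem_tropPoly {K : Type*} [LinearOrder K] [Field K] (hpn : p < n)
    (v : Fin p → Fin n → K) {d : Fin n → K} (hd : Function.Injective d) (x : Fin n → K) :
    {t : K | x + t • d ∈ tropPoly v}.Finite := by
  refine (Set.finite_range fun q : Fin n × Fin n × Fin p =>
    (v q.2.2 q.1 - v q.2.2 q.2.1 - (x q.1 - x q.2.1)) / (d q.1 - d q.2.1)).subset fun t ht => ?_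
  obtain ⟨i, j, r, hij, heq⟩ := exists_ne_sub_eq_sub_of_mem_tropPoly hpn ht
  refine ⟨(i, j, r), (div_eq_iff (sub_ne_zero.2 (hd.ne hij))).2 ?_⟩
  simp only [Pi.add_apply, Pi.smul_apply, smul_eq_mul] at heq
  linear_combination -heq

end TropicalPolytope

lemma interior_preimage_val_eq_empty_of_finite_lines {ι : Type*} {k : ι} {S : Set (ι → ℝ)}
    {d : ι → ℝ} (hdk : d k = 0) (hS : ∀ x, {t : ℝ | x + t • d ∈ S}.Finite) :
    interior ((↑) ⁻¹' S : Set {x : ι → ℝ // x k = 0}) = ∅ := by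
  refine Set.eq_empty_of_forall_notMem fun x hx => ?_
  let line (t : ℝ) : {x : ι → ℝ // x k = 0} := ⟨x + t • d, by simp [x.2, hdk]⟩
  have line_continuous : Continuous line := Continuous.subtype_mk (by fun_prop) _
  have line_zero : line 0 = x := Subtype.ext (by simp [line])
  have preimage_mem_nhds : line ⁻¹' ((↑) ⁻¹' S) ∈ nhds 0 :=
    line_continuous.continuousAt.preimage_mem_nhds
      (line_zero.symm ▸ mem_interior_iff_mem_nhds.1 hx)
  exact infinite_of_mem_nhds 0 preimage_mem_nhds (hS x)

lemma interior_preimage_val_tropPoly_eq_empty {n p : ℕ} (hpn : p < n) (v : Fin p → Fin n → ℝ)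
    (k : Fin n) : interior ((↑) ⁻¹' tropPoly v : Set {x : Fin n → ℝ // x k = 0}) = ∅ := by
  let d (i : Fin n) : ℝ := (i : ℕ) - (k : ℕ)
  have d_injective : Function.Injective d :=
    sub_left_injective.comp (Nat.cast_injective.comp Fin.val_injective)
  exact interior_preimage_val_eq_empty_of_finite_lines (sub_self _)
    (finite_setOf_add_smul_mem_tropPoly hpn v d_injective)

/-- if `n ≥ 2` and `1 ≤ p < n`, then the tropical polytope generated by any
points `v 1, …, v p` of `ℝ^n` is not pure. -/
theorem not_isPure_of_few_generators {n p : ℕ} [NeZero n] (hn : 2 ≤ n)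
    (hp : 1 ≤ p) (hpn : p < n) (vs : Fin p → Fin n → ℝ) :
    ¬ IsPure (tropPoly vs) := by
  intro hpure
  have : Nonempty (Fin p) := ⟨⟨0, hp⟩⟩
  obtain ⟨x, hx, hx0⟩ := exists_mem_tropPoly_apply_eq_zero vs 0
  have slice_eq_empty : ((↑) ⁻¹' tropPoly vs : Set {x : Fin n → ℝ // x 0 = 0}) = ∅ := by
    rw [← closure_empty, ← interior_preimage_val_tropPoly_eq_empty hpn vs 0]
    exact hpure
  exact slice_eq_empty.subset (show ⟨x, hx0⟩ ∈ _ from hx)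
end

section
/- Let n ≥ 2 and let P be the tropical polytope generated by v^1,…,v^p ∈ ℝ^n. Assume P is pure (so every extreme point of P has exactly one extremality type), fix γ^1,…,γ^p ∈ ℝ^n, and define the perturbed points ṽ^1,…,ṽ^p ∈ G^n and the tropical polytope P̃ ⊆ G^n as in the context. Let ã ∈ G^n be an (I,j)-pseudovertex of P̃, where I is a nonempty proper subset of {1,…,n} and j ∈ {1,…,n} \ I. Then there exists c ∈ ℝ such that π_2(ã_i) = c for every i ∈ I and π_2(ã_k) = c + 1 for every k ∈ {1,…,n} \ I. -/
/-- The group `G = ℝ³` with componentwise addition and the lexicographic order. -/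
abbrev G : Type := ℝ ×ₗ ℝ ×ₗ ℝ

/-- First coordinate projection `π₁ : G → ℝ`. -/
def pi1 (g : G) : ℝ := (ofLex g).1
/-- Second coordinate projection `π₂ : G → ℝ`. -/
def pi2 (g : G) : ℝ := (ofLex (ofLex g).2).1
/-- Third coordinate projection `π₃ : G → ℝ`. -/
def pi3 (g : G) : ℝ := (ofLex (ofLex g).2).2

/-- Build an element of `G` from its three real coordinates. -/
def mkG (a b c : ℝ) : G := toLex (a, toLex (b, c))

/-!
Modulo multiples of `𝟙`, the sectors of a fixed index `k` are the lower sets of a partial order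
(the pointwise order after the `k`-th coordinate has been subtracted), and an extreme point of type
`k` is a minimal point of `P` for it. Every point of `P` lies above a generator, so below every
generator there is one that is extreme of type `k`.

Near an extreme point `w` of type `k`, every `x ∈ P` satisfies `x_k - w_k ≤ x_l - w_l` for all `l`.
If `w` also had type `l ≠ k`, then `P` would lie in the hyperplane `x_k - x_l = w_k - w_l` near `w`,
which purity forbids.

Now let `k ∉ I` and `r ∈ S_k(ã)`, and let `v^s` be extreme of type `k` in the sector `S(v^r, k)`.
By (i), `s ∈ S_i(ã)` for some `i ∈ I`, and this forces both `v^r` and `v^s` to tie at `i` and `k`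
in the leading order. If `v^r` were not extreme of type `k`, the first order would give
`π₂(ã_k) ≤ π₂(ã_i)` from `r` and `π₂(ã_i) + 1 ≤ π₂(ã_k)` from `s`. So `v^r` is extreme of type `k`,
and only of type `k`; when also `r ∈ S_i(ã)` with `i ∈ I`, the tie in the first order reads
`π₂(ã_k) = π₂(ã_i) + 1`.
-/

open Filter Topology

section Sectors

variable {α : Type*} [AddCommGroup α] {n p : ℕ}

/-- The representative of `x` modulo multiples of `𝟙` whose `k`-th coordinate is zero. -/
def normalizeAt (k : Fin n) (x : Fin n → α) : Fin n → α := fun h => x h - x k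

lemma normalizeAt_eq_normalizeAt_iff {k : Fin n} {x y : Fin n → α} :
    normalizeAt k x = normalizeAt k y ↔ ∃ c, x = fun h => y h + c := by
  constructor
  · intro hxy
    refine ⟨x k - y k, funext fun h => ?_⟩
    have hh : x h - x k = y h - y k := congrFun hxy h
    rw [add_sub_left_comm, ← hh, add_sub_cancel]
  · rintro ⟨c, rfl⟩
    funext h
    exact add_sub_add_right_eq_sub _ _ _

variable [LinearOrder α] [IsOrderedAddMonoid α]

lemma mem_sector_iff_normalizeAt_le {a x : Fin n → α} {k : Fin n} :
    x ∈ sector a k ↔ normalizeAt k x ≤ normalizeAt k a :=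
  forall_congr' fun _ => sub_le_sub_iff.trans <| by
    rw [normalizeAt, normalizeAt, sub_le_sub_iff, add_comm (x k)]

lemma mem_sector_trans {x y z : Fin n → α} {k : Fin n} (hxy : x ∈ sector y k)
    (hyz : y ∈ sector z k) : x ∈ sector z k := by
  rw [mem_sector_iff_normalizeAt_le] at *
  exact hxy.trans hyz

lemma mem_sector_of_mem_sector_of_mem_sector {a x y : Fin n → α} {i k : Fin n}
    (hxy : x ∈ sector y k) (hyk : y ∈ sector a k) (hxi : x ∈ sector a i) : y ∈ sector a i := by
  intro h
  refine (hyk h).trans ?_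
  calc y k - a k = (x k - a k) - (x k - y k) := by abel
    _ ≤ (x i - a i) - (x i - y i) := sub_le_sub (hxi k) (hxy i)
    _ = y i - a i := by abel

lemma extremeOfType_iff_minimalFor {P : Set (Fin n → α)} {w : Fin n → α} {k : Fin n} :
    ExtremeOfType P w k ↔ MinimalFor (· ∈ P) (normalizeAt k) w := by
  simp only [ExtremeOfType, MinimalFor, Set.mem_inter_iff, mem_sector_iff_normalizeAt_le,
    ← normalizeAt_eq_normalizeAt_iff (k := k), and_imp]
  exact and_congr_right fun _ => forall₃_congr fun x _ hx =>
    ⟨fun h => h.ge, fun h => le_antisymm hx h⟩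

lemma mem_tropPoly_self (v : Fin p → Fin n → α) (s : Fin p) : v s ∈ tropPoly v := by
  refine ⟨fun r => -∑ h, |v r h - v s h|, fun i => ⟨⟨s, by simp⟩, ?_⟩⟩
  rintro _ ⟨r, rfl⟩
  have hi : v r i - v s i ≤ ∑ h, |v r h - v s h| :=
    (le_abs_self _).trans <| Finset.single_le_sum (f := fun h => |v r h - v s h|)
      (fun _ _ => abs_nonneg _) (Finset.mem_univ i)
  rw [neg_add_le_iff_le_add]
  exact sub_le_iff_le_add.1 hi

lemma add_const_mem_tropPoly {v : Fin p → Fin n → α} {x : Fin n → α} (hx : x ∈ tropPoly v)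
    (c : α) : (fun h => x h + c) ∈ tropPoly v := by
  obtain ⟨l, hl⟩ := hx
  refine ⟨fun r => l r + c, fun i => ⟨?_, ?_⟩⟩
  · obtain ⟨r, hr⟩ := (hl i).1
    exact ⟨r, by simp only [← hr, add_right_comm]⟩
  · rintro _ ⟨r, rfl⟩
    simpa only [add_right_comm] using add_le_add_left ((hl i).2 ⟨r, rfl⟩) c

lemma exists_mem_sector_of_mem_tropPoly {v : Fin p → Fin n → α} {x : Fin n → α}
    (hx : x ∈ tropPoly v) (k : Fin n) : ∃ s, v s ∈ sector x k := by
  obtain ⟨l, hl⟩ := hx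
  obtain ⟨s, hs⟩ := (hl k).1
  refine ⟨s, fun h => ?_⟩
  calc v s h - x h ≤ -l s := by
        rw [sub_le_iff_le_add', le_add_neg_iff_add_le, add_comm]
        exact (hl h).2 ⟨s, rfl⟩
    _ = v s k - x k := by simp [← hs]

lemma exists_extremeOfType_mem_sector (v : Fin p → Fin n → α) (r : Fin p) (k : Fin n) :
    ∃ s, v s ∈ sector (v r) k ∧ ExtremeOfType (tropPoly v) (v s) k := by
  obtain ⟨s, hsr, hmin⟩ := Set.Finite.exists_minimalFor (fun s => normalizeAt k (v s))
    {s | v s ∈ sector (v r) k} (Set.toFinite _) ⟨r, mem_sector_iff_normalizeAt_le.2 le_rfl⟩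
  refine ⟨s, hsr, extremeOfType_iff_minimalFor.2 ⟨mem_tropPoly_self v s, fun x hx hxs => ?_⟩⟩
  obtain ⟨q, hqx⟩ := exists_mem_sector_of_mem_tropPoly hx k
  have hqs : v q ∈ sector (v s) k :=
    mem_sector_trans hqx (mem_sector_iff_normalizeAt_le.2 hxs)
  have hsq := hmin (mem_sector_trans hqs hsr) (mem_sector_iff_normalizeAt_le.1 hqs)
  exact hsq.trans (mem_sector_iff_normalizeAt_le.1 hqx)

end Sectors

section Purity

variable {n p : ℕ}

section TopologicalGroup

variable {α : Type*} [AddCommGroup α] [TopologicalSpace α]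

lemma isOpenMap_normalizeAt [ContinuousAdd α] (k : Fin n) :
    IsOpenMap fun x : Fin n → α =>
      (⟨normalizeAt k x, sub_self _⟩ : {x : Fin n → α // x k = 0}) := by
  refine .of_sections fun x => ⟨fun y h => y.1 h + x k, ?_, ?_, fun y => ?_⟩
  · exact Continuous.continuousAt (continuous_pi fun h =>
      ((continuous_apply h).comp continuous_subtype_val).add continuous_const)
  · simp [normalizeAt]
  · ext h
    simp [normalizeAt, y.2]

variable [LinearOrder α] [OrderClosedTopology α] [ContinuousSub α]

lemma isClosed_setOfPred_mem_sector (x : Fin n → α) (k : Fin n) :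
    IsClosed {a | x ∈ sector a k} := by
  change IsClosed {a : Fin n → α | ∀ h, x h - a h ≤ x k - a k}
  simp only [Set.ofPred_forall]
  exact isClosed_iInter fun h => isClosed_le (by fun_prop) (by fun_prop)

variable [IsOrderedAddMonoid α] {v : Fin p → Fin n → α} {w : Fin n → α} {k l : Fin n}

lemma ExtremeOfType.eventually_mem_sector (hw : ExtremeOfType (tropPoly v) w k) :
    ∀ᶠ x in 𝓝 w, x ∈ tropPoly v → w ∈ sector x k := by
  have hsectors : ∀ᶠ x in 𝓝 w, ∀ s, v s ∈ sector x k → v s ∈ sector w k := by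
    refine eventually_all.2 fun s => ?_
    by_cases hs : v s ∈ sector w k
    · exact .of_forall fun _ _ => hs
    · filter_upwards [(isClosed_setOfPred_mem_sector (v s) k).isOpen_compl.mem_nhds hs]
        with x hx hsx using absurd hsx hx
  filter_upwards [hsectors] with x hx hxP
  obtain ⟨s, hsx⟩ := exists_mem_sector_of_mem_tropPoly hxP k
  have hws : w ∈ sector (v s) k := mem_sector_iff_normalizeAt_le.2 <|
    (extremeOfType_iff_minimalFor.1 hw).2 (mem_tropPoly_self v s)
      (mem_sector_iff_normalizeAt_le.1 (hx s hsx))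
  exact mem_sector_trans hws hsx

lemma ExtremeOfType.eventually_sub_eq_sub (hk : ExtremeOfType (tropPoly v) w k)
    (hl : ExtremeOfType (tropPoly v) w l) :
    ∀ᶠ x in 𝓝 w, x ∈ tropPoly v → x k - x l = w k - w l := by
  filter_upwards [hk.eventually_mem_sector, hl.eventually_mem_sector] with x hxk hxl hx
  have htie : w l - x l = w k - x k := le_antisymm (hxk hx l) (hxl hx k)
  grind

end TopologicalGroup

lemma IsPure.eq_closure_interior [NeZero n] {P : Set (Fin n → ℝ)} (hP : IsPure P)
    (hinv : ∀ x ∈ P, ∀ c : ℝ, (fun h => x h + c) ∈ P) : P = closure (interior P) := by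
  let N : (Fin n → ℝ) → {x : Fin n → ℝ // x 0 = 0} := fun x => ⟨normalizeAt 0 x, sub_self _⟩
  have hNopen : IsOpenMap N := isOpenMap_normalizeAt 0
  have hNcont : Continuous N := by unfold N normalizeAt; fun_prop
  have hpre : N ⁻¹' {x | x.1 ∈ P} = P := by
    ext x
    refine ⟨fun hx => ?_, fun hx => ?_⟩
    · simpa [N, normalizeAt] using hinv _ hx (x 0)
    · exact hinv x hx (-x 0)
  calc P = N ⁻¹' closure (interior {x | x.1 ∈ P}) := by rw [← show _ = _ from hP, hpre]
    _ = closure (interior (N ⁻¹' {x | x.1 ∈ P})) := by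
      rw [hNopen.preimage_closure_eq_closure_preimage hNcont,
        hNopen.preimage_interior_eq_interior_preimage hNcont]
    _ = closure (interior P) := by rw [hpre]

lemma interior_setOfPred_sub_eq {ι : Type*} [Finite ι] {k l : ι} (hkl : k ≠ l) (c : ℝ) :
    interior {x : ι → ℝ | x k - x l = c} = ∅ := by
  classical
  let φ : (ι → ℝ) →ₗ[ℝ] ℝ :=
    (LinearMap.proj k : (ι → ℝ) →ₗ[ℝ] ℝ) - LinearMap.proj l
  have hφ : Function.Surjective φ := fun t => ⟨Pi.single k t, by simp [φ, hkl.symm]⟩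
  change interior (φ ⁻¹' {c}) = ∅
  rw [← (φ.isOpenMap_of_finiteDimensional hφ).preimage_interior_eq_interior_preimage
    φ.continuous_of_finiteDimensional, interior_singleton, Set.preimage_empty]

lemma IsPure.subsingleton_setOfPred_extremeOfType [NeZero n] {v : Fin p → Fin n → ℝ}
    (hpure : IsPure (tropPoly v)) (w : Fin n → ℝ) :
    {k | ExtremeOfType (tropPoly v) w k}.Subsingleton := by
  intro k hk l hl
  by_contra hkl
  have hw : w ∈ closure (interior (tropPoly v)) := by
    rw [← hpure.eq_closure_interior fun _ => add_const_mem_tropPoly]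
    exact hk.1
  obtain ⟨y, hyint, hy⟩ := ((mem_closure_iff_frequently.1 hw).and_eventually
    (hk.eventually_sub_eq_sub hl).eventually_nhds).exists
  have hyH : {x : Fin n → ℝ | x k - x l = w k - w l} ∈ 𝓝 y := by
    filter_upwards [hy, mem_interior_iff_mem_nhds.1 hyint] with x hx hxP using hx hxP
  rw [← mem_interior_iff_mem_nhds, interior_setOfPred_sub_eq hkl] at hyH
  exact hyH

end Purity

section Perturbation

variable {α β δ : Type*} [LinearOrder α] [AddCommGroup α] [AddCommGroup β] {n p : ℕ}

/-- The leading-order part (`π₁` coordinatewise) of a point over a lexicographic product. -/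
def leadingPart (x : Fin n → α ×ₗ β ×ₗ δ) : Fin n → α := fun h => (ofLex (x h)).1

/-- The first-order part (`π₂` coordinatewise) of a point over a lexicographic product. -/
def firstOrderPart (x : Fin n → α ×ₗ β ×ₗ δ) : Fin n → β := fun h => (ofLex (ofLex (x h)).2).1

/-- The points `w r` perturb the generators `v r` of a tropical polytope to first order by `ε` in
the coordinates that are extremality types of `v r`. The third components are unconstrained. -/
structure IsExtremePerturbation (v : Fin p → Fin n → α) (ε : β)
    (w : Fin p → Fin n → α ×ₗ β ×ₗ δ) : Prop where
  leadingPart_eq : ∀ r, leadingPart (w r) = v r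
  firstOrderPart_of_extreme :
    ∀ r k, ExtremeOfType (tropPoly v) (v r) k → firstOrderPart (w r) k = ε
  firstOrderPart_of_not_extreme :
    ∀ r k, ¬ ExtremeOfType (tropPoly v) (v r) k → firstOrderPart (w r) k = 0

variable {v : Fin p → Fin n → α} {ε : β} {w : Fin p → Fin n → α ×ₗ β ×ₗ δ}

namespace IsExtremePerturbation

lemma of_eq_toLex {γ : Fin p → Fin n → δ}
    (hext : ∀ r k, ExtremeOfType (tropPoly v) (v r) k →
      w r k = toLex (v r k, toLex (ε, γ r k)))
    (hnext : ∀ r k, ¬ ExtremeOfType (tropPoly v) (v r) k →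
      w r k = toLex (v r k, toLex (0, γ r k))) :
    IsExtremePerturbation v ε w where
  leadingPart_eq r := by
    funext k
    by_cases h : ExtremeOfType (tropPoly v) (v r) k
    · simp [leadingPart, hext r k h]
    · simp [leadingPart, hnext r k h]
  firstOrderPart_of_extreme r k h := by simp [firstOrderPart, hext r k h]
  firstOrderPart_of_not_extreme r k h := by simp [firstOrderPart, hnext r k h]

lemma firstOrderPart_of_extreme_ne (hw : IsExtremePerturbation v ε w)
    (htype : ∀ r, {k | ExtremeOfType (tropPoly v) (v r) k}.Subsingleton) {r : Fin p} {i k : Fin n}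
    (hk : ExtremeOfType (tropPoly v) (v r) k) (hik : i ≠ k) : firstOrderPart (w r) i = 0 :=
  hw.firstOrderPart_of_not_extreme r i fun hi => hik (htype r hi hk)

end IsExtremePerturbation

variable [LinearOrder β]

lemma IsExtremePerturbation.firstOrderPart_nonneg (hw : IsExtremePerturbation v ε w) (hε : 0 ≤ ε)
    (r : Fin p) (k : Fin n) : 0 ≤ firstOrderPart (w r) k := by
  by_cases h : ExtremeOfType (tropPoly v) (v r) k
  · exact hε.trans_eq (hw.firstOrderPart_of_extreme r k h).symm
  · exact (hw.firstOrderPart_of_not_extreme r k h).ge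

variable [LinearOrder δ] [AddCommGroup δ] {a : Fin n → α ×ₗ β ×ₗ δ} {I : Set (Fin n)}

lemma leadingPart_mem_sector {x : Fin n → α ×ₗ β ×ₗ δ} {i : Fin n} (hx : x ∈ sector a i) :
    leadingPart x ∈ sector (leadingPart a) i :=
  fun h => (Prod.Lex.le_iff'.1 (hx h)).1

lemma firstOrderPart_sub_le_of_mem_sector {x : Fin n → α ×ₗ β ×ₗ δ} {h i : Fin n}
    (hx : x ∈ sector a i) (htie : leadingPart x ∈ sector (leadingPart a) h) :
    firstOrderPart x h - firstOrderPart a h ≤ firstOrderPart x i - firstOrderPart a i :=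
  Prod.Lex.monotone_fst_ofLex <|
    (Prod.Lex.le_iff'.1 (hx h)).2 (le_antisymm (leadingPart_mem_sector hx h) (htie i))

lemma firstOrderPart_sub_eq_of_mem_typeSet_inter {i k : Fin n} {r : Fin p}
    (hr : r ∈ typeSet w a i ∩ typeSet w a k) :
    firstOrderPart (w r) i - firstOrderPart a i = firstOrderPart (w r) k - firstOrderPart a k :=
  le_antisymm (firstOrderPart_sub_le_of_mem_sector hr.2 (leadingPart_mem_sector hr.1))
    (firstOrderPart_sub_le_of_mem_sector hr.1 (leadingPart_mem_sector hr.2))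

variable [IsOrderedAddMonoid α] [IsOrderedAddMonoid β]

namespace IsExtremePerturbation

lemma extremeOfType_of_mem_typeSet (hw : IsExtremePerturbation v ε w) (hε : 0 < ε)
    (htype : ∀ r, {k | ExtremeOfType (tropPoly v) (v r) k}.Subsingleton)
    (hcover : ∀ r, ∃ i ∈ I, r ∈ typeSet w a i) {k : Fin n} (hk : k ∉ I) {r : Fin p}
    (hr : r ∈ typeSet w a k) : ExtremeOfType (tropPoly v) (v r) k := by
  by_contra hnext
  obtain ⟨s, hsr, hs⟩ := exists_extremeOfType_mem_sector v r k
  obtain ⟨i, hiI, hsi⟩ := hcover s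
  have hik : i ≠ k := fun h => hk (h ▸ hiI)
  rw [← hw.leadingPart_eq, ← hw.leadingPart_eq] at hsr
  have hrk := leadingPart_mem_sector hr
  have hri : leadingPart (w r) ∈ sector (leadingPart a) i :=
    mem_sector_of_mem_sector_of_mem_sector hsr hrk (leadingPart_mem_sector hsi)
  have hr_le : firstOrderPart a k ≤ firstOrderPart a i := by
    have hle := firstOrderPart_sub_le_of_mem_sector hr hri
    have hnonneg := hw.firstOrderPart_nonneg hε.le r i
    rw [hw.firstOrderPart_of_not_extreme r k hnext] at hle
    grind
  have hs_le : firstOrderPart a i + ε ≤ firstOrderPart a k := by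
    have hle := firstOrderPart_sub_le_of_mem_sector hsi (mem_sector_trans hsr hrk)
    rw [hw.firstOrderPart_of_extreme s k hs, hw.firstOrderPart_of_extreme_ne htype hs hik] at hle
    grind
  exact (lt_add_of_pos_right _ hε).not_ge (hs_le.trans hr_le)

lemma firstOrderPart_eq_add (hw : IsExtremePerturbation v ε w) (hε : 0 < ε)
    (htype : ∀ r, {k | ExtremeOfType (tropPoly v) (v r) k}.Subsingleton)
    (hcover : ∀ r, ∃ i ∈ I, r ∈ typeSet w a i) {i k : Fin n} (hi : i ∈ I) (hk : k ∉ I)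
    (hik : (typeSet w a i ∩ typeSet w a k).Nonempty) :
    firstOrderPart a k = firstOrderPart a i + ε := by
  obtain ⟨r, hr⟩ := hik
  have hext := hw.extremeOfType_of_mem_typeSet hε htype hcover hk hr.2
  have htie := firstOrderPart_sub_eq_of_mem_typeSet_inter hr
  rw [hw.firstOrderPart_of_extreme r k hext,
    hw.firstOrderPart_of_extreme_ne htype hext fun h => hk (h ▸ hi)] at htie
  grind

end IsExtremePerturbation

theorem pseudovertex_fst_order_perturbation_general
    (hw : IsExtremePerturbation v ε w) (hε : 0 < ε)
    (htype : ∀ r, {k | ExtremeOfType (tropPoly v) (v r) k}.Subsingleton)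
    {j : Fin n} (hj : j ∉ I) (hpv : IsPseudovertex w a I j) :
    ∃ c : β, (∀ i ∈ I, firstOrderPart a i = c) ∧ ∀ k ∉ I, firstOrderPart a k = c + ε := by
  obtain ⟨hcover, hmeet, hmeet_j⟩ := hpv
  have hI : ∀ i ∈ I, firstOrderPart a i = firstOrderPart a j - ε := fun i hi =>
    have ⟨r, hr, _⟩ := hmeet_j i hi
    eq_sub_of_add_eq (hw.firstOrderPart_eq_add hε htype hcover hi hj ⟨r, hr⟩).symm
  refine ⟨firstOrderPart a j - ε, hI, fun k hk => ?_⟩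
  obtain ⟨i, hi, hik⟩ := hmeet k hk
  rw [hw.firstOrderPart_eq_add hε htype hcover hi hk hik, hI i hi]

end Perturbation

/-- if `ã` is an `(I,j)`-pseudovertex of the symbolically perturbed polytope
`P̃`, then, for some `c ∈ ℝ`, the first-order perturbation `π₂(ã)` equals `c` on `I` and
`c + 1` outside `I`. -/
theorem pseudovertex_fst_order_perturbation {n p : ℕ} [NeZero n] (hn : 2 ≤ n)
    (v : Fin p → Fin n → ℝ) (hpure : IsPure (tropPoly v))
    (γ : Fin p → Fin n → ℝ) (vt : Fin p → Fin n → G)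
    (hvt1 : ∀ (r : Fin p) (k : Fin n), ExtremeOfType (tropPoly v) (v r) k →
      vt r k = mkG (v r k) 1 (γ r k))
    (hvt2 : ∀ (r : Fin p) (k : Fin n), ¬ ExtremeOfType (tropPoly v) (v r) k →
      vt r k = mkG (v r k) 0 (γ r k))
    (at_ : Fin n → G) (I : Set (Fin n)) (j : Fin n)
    (hIne : I.Nonempty) (hIpr : I ≠ Set.univ) (hj : j ∉ I)
    (hpv : IsPseudovertex vt at_ I j) :
    ∃ c : ℝ, (∀ i ∈ I, pi2 (at_ i) = c) ∧ (∀ k ∉ I, pi2 (at_ k) = c + 1) :=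
  pseudovertex_fst_order_perturbation_general (.of_eq_toLex hvt1 hvt2) one_pos
    (fun r => hpure.subsingleton_setOfPred_extremeOfType (v r)) hj hpv
end
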